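/- Let T : V → g be a relative Rota-Baxter operator on a Leibniz algebra (g,[·,·]_g) with respect to a representation (V; ρL, ρR), and let 𝔗 : V → g be a linear map generating a linear deformation of T, i.e. T + t𝔗 is a relative Rota-Baxter operator for every t ∈ K. Define ω_𝔗(u,v) := ρL(𝔗u)v + ρR(𝔗v)u. Then ω_𝔗 generates a linear deformation of the Leibniz algebra (V,[·,·]_T); that is, for every t ∈ K the bilinear operation [u,v]_t := [u,v]_T + t·ω_𝔗(u,v) satisfies the left Leibniz identity [u,[v,w]_t]_t = [[u,v]_t,w]_t + [v,[u,w]_t]_t for all u,v,w ∈ V. -/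

import Mathlib

/-!
The bracket `[u, v]_T = ρL(Tu)v + ρR(Tv)u` depends linearly on `T`, and `ω_𝔗` is the same
expression with `𝔗` in place of `T`, so `[·,·]_T + t ω_𝔗 = [·,·]_{T + t𝔗}`. The theorem therefore
reduces to the fact that a relative Rota-Baxter operator induces a Leibniz bracket on `V`, applied
to `T + t𝔗`. For that fact the operator identity `T[u, v]_T = [Tu, Tv]` turns the Leibniz identity
on `V` into the axioms of a representation, evaluated on the image of `T`.
-/

section LeibnizBrackets

variable {K g V : Type*} [CommRing K] [AddCommGroup g] [Module K g] [AddCommGroup V] [Module K V]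

/-- The left Leibniz identity for a bilinear bracket: each `br x` is a derivation of `br`. -/
def IsLeftLeibniz (br : g →ₗ[K] g →ₗ[K] g) : Prop :=
  ∀ x y z : g, br x (br y z) = br (br x y) z + br y (br x z)

/-- The axioms for `(V; ρL, ρR)` to be a representation of `(g, br)`, where
`br` is an arbitrary bilinear operation. -/
structure IsLeibnizRep (br : g →ₗ[K] g →ₗ[K] g) (ρL ρR : g →ₗ[K] Module.End K V) : Prop where
  left_bracket (x y : g) : ρL (br x y) = ρL x * ρL y - ρL y * ρL x
  right_bracket (x y : g) : ρR (br x y) = ρL x * ρR y - ρR y * ρL x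
  right_mul_left (x y : g) : ρR y * ρL x = -(ρR y * ρR x)

/-- The bilinear operation `(u, v) ↦ ρL(Tu)v + ρR(Tv)u` on `V`. For a relative Rota-Baxter operator
`T` it is the induced bracket `[·,·]_T`; for a deformation direction `𝔗` it is `ω_𝔗`. -/
def inducedBracket (ρL ρR : g →ₗ[K] Module.End K V) (T : V →ₗ[K] g) : V →ₗ[K] V →ₗ[K] V :=
  ρL ∘ₗ T + (ρR ∘ₗ T).flip

/-- `T` is a relative Rota-Baxter operator on `(g, br)` with respect to `(V; ρL, ρR)`. -/
def IsRelativeRotaBaxter (br : g →ₗ[K] g →ₗ[K] g) (ρL ρR : g →ₗ[K] Module.End K V)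
    (T : V →ₗ[K] g) : Prop :=
  ∀ u v : V, br (T u) (T v) = T (inducedBracket ρL ρR T u v)

theorem inducedBracket_apply (ρL ρR : g →ₗ[K] Module.End K V) (T : V →ₗ[K] g) (u v : V) :
    inducedBracket ρL ρR T u v = ρL (T u) v + ρR (T v) u :=
  rfl

theorem inducedBracket_add_smul (ρL ρR : g →ₗ[K] Module.End K V) (T S : V →ₗ[K] g) (t : K) :
    inducedBracket ρL ρR (T + t • S) = inducedBracket ρL ρR T + t • inducedBracket ρL ρR S := by
  ext u v
  simp only [inducedBracket_apply, LinearMap.add_apply, LinearMap.smul_apply, map_add, map_smul,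
    smul_add]
  abel

variable {br : g →ₗ[K] g →ₗ[K] g} {ρL ρR : g →ₗ[K] Module.End K V}

namespace IsLeibnizRep

theorem left_bracket_apply (hρ : IsLeibnizRep br ρL ρR) (x y : g) (v : V) :
    ρL (br x y) v = ρL x (ρL y v) - ρL y (ρL x v) :=
  LinearMap.congr_fun (hρ.left_bracket x y) v

theorem right_bracket_apply (hρ : IsLeibnizRep br ρL ρR) (x y : g) (v : V) :
    ρR (br x y) v = ρL x (ρR y v) - ρR y (ρL x v) :=
  LinearMap.congr_fun (hρ.right_bracket x y) v

theorem right_left_apply (hρ : IsLeibnizRep br ρL ρR) (x y : g) (v : V) :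
    ρR y (ρL x v) = -ρR y (ρR x v) :=
  LinearMap.congr_fun (hρ.right_mul_left x y) v

end IsLeibnizRep

theorem IsRelativeRotaBaxter.isLeftLeibniz_inducedBracket {T : V →ₗ[K] g}
    (hT : IsRelativeRotaBaxter br ρL ρR T) (hρ : IsLeibnizRep br ρL ρR) :
    IsLeftLeibniz (inducedBracket ρL ρR T) := by
  intro u v w
  set B := inducedBracket ρL ρR T
  have expand_right (a b : V) : B a (B b w) =
      ρL (T a) (ρL (T b) w) + ρL (T a) (ρR (T w) b) +
        (ρL (T b) (ρR (T w) a) - ρR (T w) (ρL (T b) a)) := by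
    rw [inducedBracket_apply, ← hT, hρ.right_bracket_apply, inducedBracket_apply, map_add]
  have expand_left : B (B u v) w =
      ρL (T u) (ρL (T v) w) - ρL (T v) (ρL (T u) w) +
        (ρR (T w) (ρL (T u) v) + ρR (T w) (ρR (T v) u)) := by
    rw [inducedBracket_apply, ← hT, hρ.left_bracket_apply, inducedBracket_apply, map_add]
  rw [expand_right u v, expand_left, expand_right v u, hρ.right_left_apply (T v) (T w) u]
  abel

theorem linear_deformation_of_induced_leibniz_general (hρ : IsLeibnizRep br ρL ρR)
    (T 𝔗 : V →ₗ[K] g) (t : K) (hdef : IsRelativeRotaBaxter br ρL ρR (T + t • 𝔗)) :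
    IsLeftLeibniz (inducedBracket ρL ρR T + t • inducedBracket ρL ρR 𝔗) := by
  rw [← inducedBracket_add_smul]
  exact hdef.isLeftLeibniz_inducedBracket hρ

end LeibnizBrackets

/-- If `𝔗` generates a linear deformation of a relative Rota-Baxter operator
`T`, then `ω_𝔗(u,v) = ρL(𝔗u)v + ρR(𝔗v)u` generates a linear deformation of the Leibniz
algebra `(V,[·,·]_T)`. -/
theorem linear_deformation_of_induced_leibniz
    {K : Type*} [Field K] [CharZero K]
    {g V : Type*} [AddCommGroup g] [Module K g] [AddCommGroup V] [Module K V]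
    (br : g →ₗ[K] g →ₗ[K] g)
    (leib : ∀ x y z : g, br x (br y z) = br (br x y) z + br y (br x z))
    (ρL ρR : g →ₗ[K] Module.End K V)
    (hL : ∀ x y : g, ρL (br x y) = ρL x * ρL y - ρL y * ρL x)
    (hR : ∀ x y : g, ρR (br x y) = ρL x * ρR y - ρR y * ρL x)
    (hRL : ∀ x y : g, ρR y * ρL x = -(ρR y * ρR x))
    (T : V →ₗ[K] g)
    (hT : ∀ u v : V, br (T u) (T v) = T (ρL (T u) v + ρR (T v) u))
    (𝔗 : V →ₗ[K] g)
    (hdef : ∀ t : K, ∀ u v : V,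
        br ((T + t • 𝔗) u) ((T + t • 𝔗) v) =
          (T + t • 𝔗) (ρL ((T + t • 𝔗) u) v + ρR ((T + t • 𝔗) v) u))
    (bT : V → V → V)
    (hbT : ∀ u v : V, bT u v = ρL (T u) v + ρR (T v) u)
    (ω : V → V → V)
    (hω : ∀ u v : V, ω u v = ρL (𝔗 u) v + ρR (𝔗 v) u)
    (bt : K → V → V → V)
    (hbt : ∀ (t : K) (u v : V), bt t u v = bT u v + t • ω u v) :
    ∀ (t : K) (u v w : V),
      bt t u (bt t v w) = bt t (bt t u v) w + bt t v (bt t u w) := by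
  intro t
  simpa only [IsLeftLeibniz, LinearMap.add_apply, LinearMap.smul_apply, inducedBracket_apply,
    hbt, hbT, hω] using linear_deformation_of_induced_leibniz_general ⟨hL, hR, hRL⟩ T 𝔗 t (hdef t)
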